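/- (Simulation direction of Theorem 4.) For every label set Σ, all labeled graphs G = (V,E,l) and G' = (V',E',l') over Σ, and all ordered pairs (p,q) ∈ V × V and (p',q') ∈ V' × V': if (p,q) and (p',q') are 2-FWL_L-indistinguishable, then they are 2-WL_L-indistinguishable. -/

import Mathlib

open scoped Classical

universe u v

/-- The common 1-WL color type over label set `σ`:
`C 0 = σ`, `C (t+1) = C t × Multiset (C t)`. -/
def WL1Color (σ : Type u) : ℕ → Type u
  | 0 => σ
  | t + 1 => WL1Color σ t × Multiset (WL1Color σ t)

/-- The 1-WL coloring of a labeled graph `(G, l)`: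
`c¹⁰(v) = l v`, `c¹ᵗ⁺¹(v) = (c¹ᵗ(v), {{c¹ᵗ(u) : u ∈ N(v)}})`. -/
noncomputable def wl1 {σ : Type u} {V : Type v} [Fintype V] (G : SimpleGraph V)
    (l : V → σ) : (t : ℕ) → V → WL1Color σ t
  | 0 => l
  | t + 1 => fun v => (wl1 G l t v, (G.neighborFinset v).val.map (wl1 G l t))

/-- The type of initial pair colors over label set `σ`. -/
def PairColor0 (σ : Type u) : Type u := σ × σ × Bool × Bool

/-- Initial pair color `c⁰(p,q) = (l p, l q, 1_{(p,q)∈E}, 1_{p=q})`. -/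
noncomputable def pairInit {σ : Type u} {V : Type v} (G : SimpleGraph V) (l : V → σ)
    (e : V × V) : PairColor0 σ :=
  (l e.1, l e.2, decide (G.Adj e.1 e.2), decide (e.1 = e.2))

/-- The common (plain/local) 2-WL pair color type over label set `σ`. -/
def WL2Color (σ : Type u) : ℕ → Type u
  | 0 => PairColor0 σ
  | t + 1 => WL2Color σ t × Multiset (WL2Color σ t) × Multiset (WL2Color σ t)

/-- The plain 2-WL coloring:
`c₂ᵗ⁺¹(p,q) = (c₂ᵗ(p,q), {{c₂ᵗ(u,q) : u ∈ V}}, {{c₂ᵗ(p,v) : v ∈ V}})`. -/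
noncomputable def wl2 {σ : Type u} {V : Type v} [Fintype V] (G : SimpleGraph V)
    (l : V → σ) : (t : ℕ) → V × V → WL2Color σ t
  | 0 => pairInit G l
  | t + 1 => fun e =>
      (wl2 G l t e,
        Finset.univ.val.map (fun u => wl2 G l t (u, e.2)),
        Finset.univ.val.map (fun v => wl2 G l t (e.1, v)))

/-- The local 2-WL (2-WL_L) coloring:
`cₗᵗ⁺¹(p,q) = (cₗᵗ(p,q), {{cₗᵗ(u,q) : (u,q) ∈ E}}, {{cₗᵗ(p,v) : (p,v) ∈ E}})`. -/
noncomputable def wl2L {σ : Type u} {V : Type v} [Fintype V] (G : SimpleGraph V)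
    (l : V → σ) : (t : ℕ) → V × V → WL2Color σ t
  | 0 => pairInit G l
  | t + 1 => fun e =>
      (wl2L G l t e,
        (Finset.univ.filter (fun u => G.Adj u e.2)).val.map (fun u => wl2L G l t (u, e.2)),
        (Finset.univ.filter (fun v => G.Adj e.1 v)).val.map (fun v => wl2L G l t (e.1, v)))

/-- The common (plain/local) 2-FWL pair color type over label set `σ`. -/
def FWLColor (σ : Type u) : ℕ → Type u
  | 0 => PairColor0 σ
  | t + 1 => FWLColor σ t × Multiset (FWLColor σ t × FWLColor σ t)

/-- The 2-FWL coloring: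
`c_Fᵗ⁺¹(p,q) = (c_Fᵗ(p,q), {{(c_Fᵗ(u,q), c_Fᵗ(p,u)) : u ∈ V}})`. -/
noncomputable def fwl2 {σ : Type u} {V : Type v} [Fintype V] (G : SimpleGraph V)
    (l : V → σ) : (t : ℕ) → V × V → FWLColor σ t
  | 0 => pairInit G l
  | t + 1 => fun e =>
      (fwl2 G l t e,
        Finset.univ.val.map (fun u => (fwl2 G l t (u, e.2), fwl2 G l t (e.1, u))))

/-- The local 2-FWL (2-FWL_L) coloring:
`c_FLᵗ⁺¹(p,q) = (c_FLᵗ(p,q), {{(c_FLᵗ(u,q), c_FLᵗ(p,u)) : (u,q) ∈ E or (p,u) ∈ E}})`. -/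
noncomputable def fwl2L {σ : Type u} {V : Type v} [Fintype V] (G : SimpleGraph V)
    (l : V → σ) : (t : ℕ) → V × V → FWLColor σ t
  | 0 => pairInit G l
  | t + 1 => fun e =>
      (fwl2L G l t e,
        (Finset.univ.filter (fun u => G.Adj u e.2 ∨ G.Adj e.1 u)).val.map
          (fun u => (fwl2L G l t (u, e.2), fwl2L G l t (e.1, u))))

/-- A target link: an ordered pair of distinct, non-adjacent vertices. -/
def IsTargetLink {V : Type v} (G : SimpleGraph V) (e : V × V) : Prop :=
  e.1 ≠ e.2 ∧ ¬ G.Adj e.1 e.2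

/-- `(p,q)` in `(G,l)` and `(p',q')` in `(G',l')` are 1-WL-indistinguishable. -/
noncomputable def WL1Indist {σ : Type u} {V V' : Type v} [Fintype V] [Fintype V']
    (G : SimpleGraph V) (l : V → σ) (G' : SimpleGraph V') (l' : V' → σ)
    (e : V × V) (e' : V' × V') : Prop :=
  ∀ t : ℕ, wl1 G l t e.1 = wl1 G' l' t e'.1 ∧ wl1 G l t e.2 = wl1 G' l' t e'.2

/-- 2-WL-indistinguishability. -/
noncomputable def WL2Indist {σ : Type u} {V V' : Type v} [Fintype V] [Fintype V']
    (G : SimpleGraph V) (l : V → σ) (G' : SimpleGraph V') (l' : V' → σ)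
    (e : V × V) (e' : V' × V') : Prop :=
  ∀ t : ℕ, wl2 G l t e = wl2 G' l' t e'

/-- Local 2-WL (2-WL_L) indistinguishability. -/
noncomputable def WL2LIndist {σ : Type u} {V V' : Type v} [Fintype V] [Fintype V']
    (G : SimpleGraph V) (l : V → σ) (G' : SimpleGraph V') (l' : V' → σ)
    (e : V × V) (e' : V' × V') : Prop :=
  ∀ t : ℕ, wl2L G l t e = wl2L G' l' t e'

/-- 2-FWL-indistinguishability. -/
noncomputable def FWL2Indist {σ : Type u} {V V' : Type v} [Fintype V] [Fintype V']
    (G : SimpleGraph V) (l : V → σ) (G' : SimpleGraph V') (l' : V' → σ)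
    (e : V × V) (e' : V' × V') : Prop :=
  ∀ t : ℕ, fwl2 G l t e = fwl2 G' l' t e'

/-- Local 2-FWL (2-FWL_L) indistinguishability. -/
noncomputable def FWL2LIndist {σ : Type u} {V V' : Type v} [Fintype V] [Fintype V']
    (G : SimpleGraph V) (l : V → σ) (G' : SimpleGraph V') (l' : V' → σ)
    (e : V × V) (e' : V' × V') : Prop :=
  ∀ t : ℕ, fwl2L G l t e = fwl2L G' l' t e'

/-- The 0/1 labeling trick: augment the labeling with indicator of membership in `{p, q}`. -/
noncomputable def label01 {σ : Type u} {V : Type v} (l : V → σ) (e : V × V) :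
    V → σ × Bool :=
  fun v => (l v, decide (v = e.1 ∨ v = e.2))

/-- 1-WL-with-0/1-labeling indistinguishability of target links. -/
noncomputable def WL1LabelIndist {σ : Type u} {V V' : Type v} [Fintype V] [Fintype V']
    (G : SimpleGraph V) (l : V → σ) (G' : SimpleGraph V') (l' : V' → σ)
    (e : V × V) (e' : V' × V') : Prop :=
  WL1Indist G (label01 l e) G' (label01 l' e') e e'

/-- The number of common neighbors of `p` and `q` in `G`. -/
noncomputable def commonNbrCount {V : Type v} [Fintype V] (G : SimpleGraph V)
    (e : V × V) : ℕ :=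
  (G.neighborFinset e.1 ∩ G.neighborFinset e.2).card

/-!
A local 2-FWL color records the initial color of its pair, hence whether the pair is an edge. Each
entry `(c(u,q), c(p,u))` of the multiset aggregated at `(p,q)` thus tells which of `(u,q) ∈ E` and
`(p,u) ∈ E` holds, so filtering the entries by either condition and projecting recovers the two
multisets that local 2-WL aggregates. By recursion on the round, the local 2-WL color is a function
of the local 2-FWL color of the same round, and this function does not depend on the graph.
-/

namespace FWLColor

variable {σ : Type u}

/-- The initial pair color recorded in a 2-FWL color. -/
def initialColor : {t : ℕ} → FWLColor σ t → PairColor0 σ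
  | 0, c => c
  | _ + 1, c => initialColor c.1

/-- The adjacency indicator recorded in a 2-FWL color: whether it is the color of an edge. -/
def isEdge {t : ℕ} (c : FWLColor σ t) : Bool :=
  c.initialColor.2.2.1

/-- For a color of `(p,q)`, the multiset of previous-round colors of the pairs `(u,q)` that are
edges, as extracted from the aggregated pairs `(c(u,q), c(p,u))`. -/
def leftNeighborColors {t : ℕ} (c : FWLColor σ (t + 1)) : Multiset (FWLColor σ t) :=
  (c.2.filter fun x => x.1.isEdge).map Prod.fst

/-- For a color of `(p,q)`, the multiset of previous-round colors of the pairs `(p,u)` that are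
edges, as extracted from the aggregated pairs `(c(u,q), c(p,u))`. -/
def rightNeighborColors {t : ℕ} (c : FWLColor σ (t + 1)) : Multiset (FWLColor σ t) :=
  (c.2.filter fun x => x.2.isEdge).map Prod.snd

/-- The local 2-WL color determined by a local 2-FWL color of the same round. -/
def toWL2Color : {t : ℕ} → FWLColor σ t → WL2Color σ t
  | 0, c => c
  | _ + 1, c =>
    (toWL2Color c.1, c.leftNeighborColors.map toWL2Color, c.rightNeighborColors.map toWL2Color)

end FWLColor

section LocalColorings

variable {σ : Type u} {V : Type v} [Fintype V] (G : SimpleGraph V) (l : V → σ) (t : ℕ) (e : V × V)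

theorem initialColor_fwl2L : (fwl2L G l t e).initialColor = pairInit G l e := by
  induction t with
  | zero => rfl
  | succ _ ih => exact ih

theorem isEdge_fwl2L : (fwl2L G l t e).isEdge ↔ G.Adj e.1 e.2 := by
  rw [FWLColor.isEdge, initialColor_fwl2L]
  exact decide_eq_true_iff

theorem leftNeighborColors_fwl2L :
    (fwl2L G l (t + 1) e).leftNeighborColors =
      (Finset.univ.filter fun u => G.Adj u e.2).val.map fun u => fwl2L G l t (u, e.2) := by
  simp only [FWLColor.leftNeighborColors, fwl2L, Finset.filter_val, Multiset.filter_map,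
    Multiset.map_map, Function.comp_def, isEdge_fwl2L, Multiset.filter_filter,
    and_iff_left_of_imp Or.inl]

theorem rightNeighborColors_fwl2L :
    (fwl2L G l (t + 1) e).rightNeighborColors =
      (Finset.univ.filter fun v => G.Adj e.1 v).val.map fun v => fwl2L G l t (e.1, v) := by
  simp only [FWLColor.rightNeighborColors, fwl2L, Finset.filter_val, Multiset.filter_map,
    Multiset.map_map, Function.comp_def, isEdge_fwl2L, Multiset.filter_filter,
    and_iff_left_of_imp Or.inr]

theorem toWL2Color_fwl2L : (fwl2L G l t e).toWL2Color = wl2L G l t e := by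
  induction t generalizing e with
  | zero => rfl
  | succ t ih =>
    simp only [FWLColor.toWL2Color, wl2L, leftNeighborColors_fwl2L, rightNeighborColors_fwl2L,
      Multiset.map_map, Function.comp_def, ih]
    exact Prod.ext (ih e) rfl

end LocalColorings

theorem local_fwl2_refines_local_wl2_general {σ : Type u} {V V' : Type*} [Fintype V]
    [Fintype V'] {G : SimpleGraph V} {l : V → σ} {G' : SimpleGraph V'} {l' : V' → σ}
    {e : V × V} {e' : V' × V'} {t : ℕ} (h : fwl2L G l t e = fwl2L G' l' t e') :
    wl2L G l t e = wl2L G' l' t e' := by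
  rw [← toWL2Color_fwl2L, h, toWL2Color_fwl2L]

/-- Simulation direction of Theorem 4: local 2-FWL refines local 2-WL. -/
theorem local_fwl2_refines_local_wl2 :
    ∀ (σ : Type u) (V V' : Type v) [Fintype V] [Fintype V']
      (G : SimpleGraph V) (l : V → σ) (G' : SimpleGraph V') (l' : V' → σ)
      (e : V × V) (e' : V' × V'),
      FWL2LIndist G l G' l' e e' → WL2LIndist G l G' l' e e' := by
  intro σ V V' _ _ G l G' l' e e' h t
  exact local_fwl2_refines_local_wl2_general (h t)
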